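/- (Spectral gap.) There exist a constant C_gap > 0 and an integer L₀ > 1 such that for all L ≥ L₀ and all x₀ ∈ Q_{R_L − r_L}, on the event E¹_{L,x₀} ∩ E²_{L,x₀}, the second largest eigenvalue of Δ + ξ_L on Q_{R_L} with Dirichlet boundary conditions satisfies λ₂(Q_{R_L}, ξ_L) ≤ ξ_L(x₀) − C_gap · a_L/d_L. -/

import Mathlib

open MeasureTheory ProbabilityTheory Filter Finset

noncomputable section

/-- Euclidean (ℓ²) norm of a point of `ℤ^d`. -/
def znorm {d : ℕ} (x : Fin d → ℤ) : ℝ := Real.sqrt (∑ i, ((x i : ℝ)) ^ 2)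

/-- The discrete box `[-a/2, a/2]^d ∩ ℤ^d`. -/
def QBox (d : ℕ) (a : ℝ) : Finset (Fin d → ℤ) :=
  Finset.Icc (fun _ => Int.ceil (-(a / 2))) (fun _ => Int.floor (a / 2))

/-- The translated box `z + ([-a/2, a/2]^d ∩ ℤ^d)`. -/
def QBoxAt {d : ℕ} (a : ℝ) (z : Fin d → ℤ) : Finset (Fin d → ℤ) :=
  (QBox d a).image (fun x => z + x)

/-- The box `[-1,1]^d ⊂ ℝ^d`. -/
def unitBox (d : ℕ) : Set (Fin d → ℝ) := Set.univ.pi fun _ => Set.Icc (-1) 1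

/-- Nearest-neighbour adjacency on `ℤ^d`. -/
def Adj {d : ℕ} (x y : Fin d → ℤ) : Prop := (∑ i, |x i - y i|) = 1

instance {d : ℕ} (x y : Fin d → ℤ) : Decidable (Adj x y) := by
  unfold Adj; infer_instance

/-- `(lam, f)` is an eigenpair of the Anderson Hamiltonian `Δ + V` on `C ⊂ ℤ^d`
with Dirichlet boundary conditions (`f` vanishes outside `C`). -/
def IsDirichletEigenpair {d : ℕ} (C : Finset (Fin d → ℤ)) (V : (Fin d → ℤ) → ℝ)
    (lam : ℝ) (f : (Fin d → ℤ) → ℝ) : Prop :=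
  (∀ x ∉ C, f x = 0) ∧
  ∀ x ∈ C, ((∑ y ∈ C, if Adj x y then f y else 0) - 2 * (d : ℝ) * f x) + V x * f x = lam * f x

/-- `lam` is the largest Dirichlet eigenvalue of `Δ + V` on `C`. -/
def IsTopEigenvalue {d : ℕ} (C : Finset (Fin d → ℤ)) (V : (Fin d → ℤ) → ℝ) (lam : ℝ) : Prop :=
  (∃ f, f ≠ 0 ∧ IsDirichletEigenpair C V lam f) ∧
  ∀ mu g, g ≠ 0 → IsDirichletEigenpair C V mu g → mu ≤ lam

/-- `(lam, f)` is the principal Dirichlet eigenvalue of `Δ + V` on `C` together with its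
ℓ²-normalised nonnegative principal eigenfunction. -/
def IsPrincipalEigenpair {d : ℕ} (C : Finset (Fin d → ℤ)) (V : (Fin d → ℤ) → ℝ)
    (lam : ℝ) (f : (Fin d → ℤ) → ℝ) : Prop :=
  IsDirichletEigenpair C V lam f ∧ (∑ x ∈ C, f x ^ 2) = 1 ∧ (∀ x, 0 ≤ f x) ∧
  ∀ mu g, g ≠ 0 → IsDirichletEigenpair C V mu g → mu ≤ lam

/-- A complete orthonormal eigenbasis of `Δ + V` on `C` with Dirichlet boundary
conditions, the eigenvalues being listed in nonincreasing order: `lam k` is the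
`(k+1)`-th largest eigenvalue (with multiplicity) and `phi k` the associated
normalised eigenfunction. -/
def IsDirichletEigenbasis {d : ℕ} (C : Finset (Fin d → ℤ)) (V : (Fin d → ℤ) → ℝ)
    (lam : ℕ → ℝ) (phi : ℕ → (Fin d → ℤ) → ℝ) : Prop :=
  (∀ k < C.card, IsDirichletEigenpair C V (lam k) (phi k)) ∧
  (∀ j < C.card, ∀ k < C.card, j ≤ k → lam k ≤ lam j) ∧
  (∀ j < C.card, ∀ k < C.card, (∑ x ∈ C, phi j x * phi k x) = if j = k then 1 else 0)

/-- Covariance of two real random variables. -/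
def covar {Ω : Type} [MeasurableSpace Ω] (P : Measure Ω) (X Y : Ω → ℝ) : ℝ :=
  ∫ ω, (X ω - ∫ ω', X ω' ∂P) * (Y ω - ∫ ω', Y ω' ∂P) ∂P

/-- The basic setting of the paper: for each `L`, a centred stationary Gaussian field
`ξ_L` on `ℤ^d` with nonnegative covariance function `v_L`, `v_L(0) = 1`; `d_L` is defined
through `sup_{|x|=1} v_L(x) = 1 − 1/d_L` and `a_L > 0` through `P(ξ_L(0) > a_L) = L^{−d}`. -/
structure GaussSetting (d : ℕ) (Ω : Type) [MeasurableSpace Ω] where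
  P : Measure Ω
  hP : IsProbabilityMeasure P
  ξ : ℕ → Ω → (Fin d → ℤ) → ℝ
  v : ℕ → (Fin d → ℤ) → ℝ
  meas : ∀ L x, Measurable fun ω => ξ L ω x
  v_nonneg : ∀ L x, 0 ≤ v L x
  v_zero : ∀ L, v L 0 = 1
  gaussian : ∀ L, 2 ≤ L → ∀ (s : Finset (Fin d → ℤ)) (c : (Fin d → ℤ) → ℝ),
    Measure.map (fun ω => ∑ x ∈ s, c x * ξ L ω x) P
      = gaussianReal 0 (Real.toNNReal (∑ x ∈ s, ∑ y ∈ s, c x * c y * v L (x - y)))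
  dL : ℕ → ℝ
  dL_pos : ∀ L, 2 ≤ L → 0 < dL L
  dL_def : ∀ L, 2 ≤ L →
    IsGreatest {t : ℝ | ∃ x : Fin d → ℤ, znorm x = 1 ∧ t = v L x} (1 - 1 / dL L)
  aL : ℕ → ℝ
  aL_pos : ∀ L, 2 ≤ L → 0 < aL L
  aL_def : ∀ L, 2 ≤ L →
    P {ω | aL L < ξ L ω 0} = ENNReal.ofReal (1 / (L : ℝ) ^ d)

namespace GaussSetting

variable {d : ℕ} {Ω : Type} [MeasurableSpace Ω] (S : GaussSetting d Ω)

/-- The shape `S_L(x) = a_L (1 − v_L(x))`. -/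
def shape (L : ℕ) (x : Fin d → ℤ) : ℝ := S.aL L * (1 - S.v L x)

/-- Long-range decay assumption (I):
`sup_{|x| ≥ exp(√(ln L))} v_L(x) ln|x| → 0` as `L → ∞`. -/
def LongRangeDecay : Prop :=
  ∀ ε > (0 : ℝ), ∀ᶠ L : ℕ in atTop, ∀ x : Fin d → ℤ,
    Real.exp (Real.sqrt (Real.log L)) ≤ znorm x → S.v L x * Real.log (znorm x) ≤ ε

/-- Short-range decay assumption (II), with constants `c, c' > 0`. -/
def ShortRangeDecay (c c' : ℝ) : Prop :=
  0 < c ∧ 0 < c' ∧ ∀ L, 2 ≤ L → ∀ x : Fin d → ℤ, x ≠ 0 →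
    1 - Real.exp (c' * znorm x) / S.dL L ≤ S.v L x ∧ S.v L x ≤ 1 - c / S.dL L

/-- Assumption 1: `d_L ≪ a_L`. -/
def Assumption1 : Prop := Tendsto (fun L => S.dL L / S.aL L) atTop (nhds 0)

/-- The fluctuation field `ζ_{L,y}(x) = ξ_L(x) − ξ_L(y) v_L(x − y)`. -/
def zeta (L : ℕ) (y x : Fin d → ℤ) (ω : Ω) : ℝ :=
  S.ξ L ω x - S.ξ L ω y * S.v L (x - y)

/-- The field `Φ_L(y) = ∑_{x ∈ Q_{r_L}, x ≠ 0} φ̄_L(x)² ζ_{L,y}(x + y)`. -/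
def Phi (r : ℕ → ℝ) (phiBar : ℕ → (Fin d → ℤ) → ℝ) (L : ℕ) (y : Fin d → ℤ)
    (ω : Ω) : ℝ :=
  ∑ x ∈ (QBox d (r L)).erase 0, phiBar L x ^ 2 * S.zeta L y (x + y) ω

end GaussSetting

/-- The auxiliary mesoscopic data: the scales `r_L, R_L`, the principal eigenpair
`(λ̄_L, φ̄_L)` of `Δ − S_L` on `Q_{r_L}` and `τ_L` with `τ_L² = Var(Φ_L(0))`. -/
structure MesoData {d : ℕ} {Ω : Type} [MeasurableSpace Ω] (S : GaussSetting d Ω) where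
  rL : ℕ → ℝ
  RL : ℕ → ℝ
  lamBar : ℕ → ℝ
  phiBar : ℕ → (Fin d → ℤ) → ℝ
  tau : ℕ → ℝ
  rL_lower : ∀ L, 2 ≤ L → Real.log (S.aL L) ≤ Real.log (rL L)
  rL_upper : Tendsto (fun L => Real.log (rL L) / Real.sqrt (S.aL L)) atTop (nhds 0)
  RL_lower : Tendsto (fun L => S.aL L / Real.log (RL L)) atTop (nhds 0)
  RL_upper : Tendsto (fun L => Real.log (RL L) / (S.aL L * (S.aL L / S.dL L))) atTop (nhds 0)
  principal : ∀ L, 2 ≤ L →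
    IsPrincipalEigenpair (QBox d (rL L)) (fun x => -(S.shape L x)) (lamBar L) (phiBar L)
  tau_nonneg : ∀ L, 0 ≤ tau L
  tau_def : ∀ L, 2 ≤ L → tau L ^ 2 = variance (S.Phi rL phiBar L 0) S.P

/-- Assumption 2: `τ_L ≪ a_L^{-1} (a_L/d_L)^{1/2}`. -/
def Assumption2 {d : ℕ} {Ω : Type} [MeasurableSpace Ω] (S : GaussSetting d Ω)
    (M : MesoData S) : Prop :=
  Tendsto (fun L => S.aL L * M.tau L * Real.sqrt (S.dL L / S.aL L)) atTop (nhds 0)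

/-- The event `E¹_{L,x₀} = {|ξ_L(x₀) − a_L| < θ}`, `θ = 2d+1`. -/
def EventE1 {d : ℕ} {Ω : Type} [MeasurableSpace Ω] (S : GaussSetting d Ω) (L : ℕ)
    (x₀ : Fin d → ℤ) : Set Ω :=
  {ω | |S.ξ L ω x₀ - S.aL L| < 2 * (d : ℝ) + 1}

/-- The event `E²_{L,x₀} = {|ζ_{L,x₀}(x)| ≤ S_L(x−x₀)/10, ∀ x ∈ Q_{2R_L,x₀}}`. -/
def EventE2 {d : ℕ} {Ω : Type} [MeasurableSpace Ω] (S : GaussSetting d Ω) (RL : ℕ → ℝ)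
    (L : ℕ) (x₀ : Fin d → ℤ) : Set Ω :=
  {ω | ∀ x ∈ QBoxAt (2 * RL L) x₀, |S.zeta L x₀ x ω| ≤ S.shape L (x - x₀) / 10}

/-- The event `E³_{L,x₀}` controlling the fluctuation field on `Q_{R_L,x₀}`. -/
def EventE3 {d : ℕ} {Ω : Type} [MeasurableSpace Ω] (S : GaussSetting d Ω) (RL : ℕ → ℝ)
    (κ : ℝ) (L : ℕ) (x₀ : Fin d → ℤ) : Set Ω :=
  {ω | ∀ x ∈ QBoxAt (RL L) x₀, x ≠ x₀ →
    |S.zeta L x₀ x ω| ≤ Real.sqrt (variance (S.zeta L x₀ x) S.P) *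
      (S.aL L / S.dL L) ^ (κ * znorm (x - x₀)) *
      Real.sqrt (max 1 (|S.ξ L ω x₀ - S.aL L| * S.aL L))}

/-- The event `E_{L,x₀} = E¹ ∩ E² ∩ E³`. -/
def EventE {d : ℕ} {Ω : Type} [MeasurableSpace Ω] (S : GaussSetting d Ω) (RL : ℕ → ℝ)
    (κ : ℝ) (L : ℕ) (x₀ : Fin d → ℤ) : Set Ω :=
  EventE1 S L x₀ ∩ EventE2 S RL L x₀ ∩ EventE3 S RL κ L x₀

end

/-!
The two top eigenfunctions span a plane, which meets the hyperplane `{f | f x₀ = 0}`. On that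
hyperplane the quadratic form of `Δ + ξ_L` is at most `max_{x ≠ x₀} ξ_L(x) ‖f‖²`, because the
Dirichlet Laplacian is nonpositive; hence `λ₂` is bounded by the second largest value of `ξ_L`.
On `E¹ ∩ E²` one has `ξ_L(x) ≤ ξ_L(x₀) - (1 - v_L(x - x₀)) (ξ_L(x₀) - a_L / 10)` with
`ξ_L(x₀) ≥ 3 a_L / 5` for large `L`, and `1 - v_L ≥ 𝔠 / d_L` away from the origin.
-/

open scoped Matrix InnerProductSpace

/-- The upper half of the Courant–Fischer principle: `B` cuts out a subspace of codimension at most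
`finrank F`, on which the Rayleigh quotient is bounded by `m`. -/
theorem exists_le_of_re_inner_le_on_ker {𝕜 E F ι : Type*} [RCLike 𝕜] [NormedAddCommGroup E]
    [InnerProductSpace 𝕜 E] [AddCommGroup F] [Module 𝕜 F] [FiniteDimensional 𝕜 F] [Fintype ι]
    {T : E →ₗ[𝕜] E} {u : ι → E} {μ : ι → ℝ} (hu : Orthonormal 𝕜 u)
    (hT : ∀ i, T (u i) = (μ i : 𝕜) • u i) (B : E →ₗ[𝕜] F)
    (hF : Module.finrank 𝕜 F < Fintype.card ι) {m : ℝ}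
    (hm : ∀ f, B f = 0 → RCLike.re ⟪f, T f⟫_𝕜 ≤ m * ‖f‖ ^ 2) : ∃ i, μ i ≤ m := by
  obtain ⟨a, ha, ha₀⟩ := (Submodule.ne_bot_iff _).mp <|
    LinearMap.ker_ne_bot_of_finrank_lt (f := B ∘ₗ Fintype.linearCombination 𝕜 u) <| by
      rwa [Module.finrank_fintype_fun_eq_card]
  set f := ∑ i, a i • u i with hf
  have hBf : B f = 0 := by
    simpa only [LinearMap.mem_ker, LinearMap.comp_apply, Fintype.linearCombination_apply] using ha
  have norm_sq : ‖f‖ ^ 2 = ∑ i, ‖a i‖ ^ 2 := by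
    rw [← inner_self_eq_norm_sq (𝕜 := 𝕜), hf, hu.inner_sum, map_sum]
    simp only [RCLike.conj_mul, ← RCLike.ofReal_pow, RCLike.ofReal_re]
  have form : RCLike.re ⟪f, T f⟫_𝕜 = ∑ i, μ i * ‖a i‖ ^ 2 := by
    have hTf : T f = ∑ i, (a i * μ i) • u i := by simp [hf, hT, smul_smul]
    rw [hTf, hf, hu.inner_sum, map_sum]
    refine Finset.sum_congr rfl fun i _ => ?_
    rw [← mul_assoc, RCLike.conj_mul, ← RCLike.ofReal_pow, ← RCLike.ofReal_mul, RCLike.ofReal_re,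
      mul_comm]
  by_contra! hμ
  obtain ⟨i, hi⟩ := Function.ne_iff.mp ha₀
  have : m * ‖f‖ ^ 2 < RCLike.re ⟪f, T f⟫_𝕜 := by
    rw [norm_sq, form, Finset.mul_sum]
    exact Finset.sum_lt_sum (fun j _ => by gcongr; exact (hμ j).le)
      ⟨i, Finset.mem_univ i, mul_lt_mul_of_pos_right (hμ i) (by positivity [norm_pos_iff.mpr hi])⟩
  exact this.not_ge (hm f hBf)

theorem dotProduct_adjMatrix_mulVec_le {V : Type*} [Fintype V] (G : SimpleGraph V)
    [DecidableRel G.Adj] {n : ℕ} (hG : ∀ x, G.degree x ≤ n) (f : V → ℝ) :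
    f ⬝ᵥ G.adjMatrix ℝ *ᵥ f ≤ n * (f ⬝ᵥ f) := by
  classical
  have laplacian_nonneg : 0 ≤ f ⬝ᵥ G.lapMatrix ℝ *ᵥ f :=
    (G.posSemidef_lapMatrix ℝ).dotProduct_mulVec_nonneg f
  calc f ⬝ᵥ G.adjMatrix ℝ *ᵥ f ≤ f ⬝ᵥ G.degMatrix ℝ *ᵥ f := by
        rwa [SimpleGraph.lapMatrix, Matrix.sub_mulVec, dotProduct_sub, sub_nonneg]
          at laplacian_nonneg
    _ = ∑ x, (G.degree x : ℝ) * (f x * f x) := by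
        simp only [G.dotProduct_mulVec_degMatrix, mul_assoc]
    _ ≤ ∑ x, (n : ℝ) * (f x * f x) := by
        gcongr with x
        · exact mul_self_nonneg _
        · exact hG x
    _ = n * (f ⬝ᵥ f) := by rw [dotProduct, Finset.mul_sum]

/-- The nearest-neighbour graph of `ℤ^d`; its restriction to `C` carries the Dirichlet Laplacian. -/
def latticeGraph (d : ℕ) : SimpleGraph (Fin d → ℤ) where
  Adj := Adj
  symm := ⟨fun x y h => by simpa only [Adj, abs_sub_comm] using h⟩
  loopless := ⟨fun x h => by simp [Adj] at h⟩

instance {d : ℕ} : DecidableRel (latticeGraph d).Adj :=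
  inferInstanceAs (DecidableRel (Adj (d := d)))

theorem Adj.exists_eq_add_single {d : ℕ} {x y : Fin d → ℤ} (h : Adj x y) :
    ∃ (i : Fin d) (s : ℤˣ), y = x + Pi.single i (s : ℤ) := by
  have hsum : ∑ i, (y i - x i).natAbs = 1 := by
    zify
    simpa only [Adj, abs_sub_comm] using h
  obtain ⟨i, hi⟩ := (Finsupp.sum_eq_one_iff
    (Finsupp.equivFunOnFinite.symm fun i => (y i - x i).natAbs)).mp <| by
      rwa [Finsupp.sum_fintype _ _ fun _ => rfl]
  have hdiff (j : Fin d) : (y j - x j).natAbs = Finsupp.single i 1 j := DFunLike.congr_fun hi j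
  have hunit : IsUnit (y i - x i) := by
    rw [Int.isUnit_iff_natAbs_eq, hdiff, Finsupp.single_eq_same]
  refine ⟨i, hunit.unit, funext fun j => ?_⟩
  rcases eq_or_ne j i with rfl | hj
  · simp
  · have := hdiff j
    rw [Finsupp.single_eq_of_ne hj, Int.natAbs_eq_zero, sub_eq_zero] at this
    simp [this, hj]

theorem degree_comap_latticeGraph_le {d : ℕ} (C : Finset (Fin d → ℤ)) (x : C) :
    ((latticeGraph d).comap ((↑) : C → Fin d → ℤ)).degree x ≤ 2 * d := by
  set G := (latticeGraph d).comap ((↑) : C → Fin d → ℤ)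
  have hsub : (G.neighborFinset x).map (Function.Embedding.subtype _) ⊆
      univ.image fun p : Fin d × ℤˣ => x.1 + Pi.single p.1 (p.2 : ℤ) := by
    intro z hz
    obtain ⟨y, hy, rfl⟩ := Finset.mem_map.mp hz
    obtain ⟨i, s, hs⟩ := Adj.exists_eq_add_single ((G.mem_neighborFinset x y).mp hy)
    exact Finset.mem_image.mpr ⟨(i, s), Finset.mem_univ _, hs.symm⟩
  calc G.degree x = #((G.neighborFinset x).map (Function.Embedding.subtype _)) := by
        rw [Finset.card_map, G.card_neighborFinset_eq_degree]
    _ ≤ Fintype.card (Fin d × ℤˣ) := (Finset.card_le_card hsub).trans Finset.card_image_le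
    _ = 2 * d := by rw [Fintype.card_prod, Fintype.card_fin, Fintype.card_units_int, mul_comm]

/-- The matrix of `Δ + V` on `ℓ²(C)` with Dirichlet boundary conditions; `Δ` is normalised as the
sum over neighbours minus `2d` times the identity. -/
noncomputable def dirichletHamiltonian {d : ℕ} (C : Finset (Fin d → ℤ)) (V : (Fin d → ℤ) → ℝ) :
    Matrix C C ℝ :=
  ((latticeGraph d).comap ((↑) : C → Fin d → ℤ)).adjMatrix ℝ +
    Matrix.diagonal fun x : C => V x - 2 * d

/-- The restriction of `f` to `C` as an element of `ℓ²(C)`, where the eigenfunctions of a Dirichlet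
eigenpair become eigenvectors of `dirichletHamiltonian`. -/
def restrictL2 {α : Type*} (C : Finset α) (f : α → ℝ) : EuclideanSpace ℝ C :=
  WithLp.toLp 2 fun x => f x

theorem inner_dirichletHamiltonian_le {d : ℕ} (C : Finset (Fin d → ℤ)) (V : (Fin d → ℤ) → ℝ)
    (f : EuclideanSpace ℝ C) :
    ⟪f, (dirichletHamiltonian C V).toEuclideanLin f⟫_ℝ ≤ ∑ x : C, V x * f x ^ 2 := by
  have hadj := dotProduct_adjMatrix_mulVec_le _ (degree_comap_latticeGraph_le C) f.ofLp
  have hdiag : f.ofLp ⬝ᵥ Matrix.diagonal (fun x : C => V x - 2 * d) *ᵥ f.ofLp =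
      ∑ x : C, V x * f x ^ 2 - (2 * d : ℕ) * (f.ofLp ⬝ᵥ f.ofLp) := by
    simp only [dotProduct, Matrix.mulVec_diagonal, Finset.mul_sum, ← Finset.sum_sub_distrib]
    push_cast
    exact Finset.sum_congr rfl fun x _ => by ring
  rw [EuclideanSpace.inner_eq_star_dotProduct, star_trivial, dotProduct_comm,
    Matrix.ofLp_toLpLin, Matrix.toLin'_apply, dirichletHamiltonian, Matrix.add_mulVec,
    dotProduct_add, hdiag]
  linarith

theorem IsDirichletEigenpair.toEuclideanLin_restrictL2 {d : ℕ} {C : Finset (Fin d → ℤ)}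
    {V f : (Fin d → ℤ) → ℝ} {lam : ℝ} (h : IsDirichletEigenpair C V lam f) :
    (dirichletHamiltonian C V).toEuclideanLin (restrictL2 C f) = lam • restrictL2 C f := by
  ext x
  have hneighbours : (((latticeGraph d).comap ((↑) : C → Fin d → ℤ)).adjMatrix ℝ *ᵥ
      fun y : C => f y) x = ∑ y ∈ C, if Adj x.1 y then f y else 0 := by
    rw [← Finset.sum_coe_sort C, Matrix.mulVec, dotProduct]
    simp only [SimpleGraph.adjMatrix_apply, ite_mul, one_mul, zero_mul]
    rfl
  rw [Matrix.ofLp_toLpLin, Matrix.toLin'_apply, dirichletHamiltonian, Matrix.add_mulVec,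
    Pi.add_apply, Matrix.mulVec_diagonal, PiLp.smul_apply, smul_eq_mul]
  simp only [restrictL2]
  linarith [h.2 x x.2]

namespace IsDirichletEigenbasis

variable {d : ℕ} {C : Finset (Fin d → ℤ)} {V : (Fin d → ℤ) → ℝ} {lam : ℕ → ℝ}
  {phi : ℕ → (Fin d → ℤ) → ℝ}

theorem orthonormal_restrictL2 (h : IsDirichletEigenbasis C V lam phi) :
    Orthonormal ℝ fun k : Fin #C => restrictL2 C (phi k) := by
  refine orthonormal_iff_ite.mpr fun j k => ?_
  simp only [restrictL2, PiLp.inner_apply, RCLike.inner_apply, conj_trivial, mul_comm (phi k _),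
    Finset.sum_coe_sort C fun x => phi j x * phi k x, h.2.2 j j.2 k k.2, Fin.ext_iff]

theorem eigenvalue_le_of_card_lt_le (h : IsDirichletEigenbasis C V lam phi) {k : ℕ} (hk : k < #C)
    {m : ℝ} (hm : #{x ∈ C | m < V x} ≤ k) : lam k ≤ m := by
  let toC : Fin (k + 1) → Fin #C := Fin.castLE hk
  let high : Finset (Fin d → ℤ) := {x ∈ C | m < V x}
  let evalHigh : EuclideanSpace ℝ C →ₗ[ℝ] (high → ℝ) :=
    LinearMap.funLeft ℝ ℝ (Set.inclusion (Finset.filter_subset _ C)) ∘ₗ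
      (WithLp.linearEquiv 2 ℝ (C → ℝ)).toLinearMap
  have codim_lt : Module.finrank ℝ (high → ℝ) < Fintype.card (Fin (k + 1)) := by
    rw [Module.finrank_fintype_fun_eq_card, Fintype.card_coe, Fintype.card_fin]
    exact Nat.lt_succ_of_le hm
  have rayleigh_le (f : EuclideanSpace ℝ C) (hf : evalHigh f = 0) :
      RCLike.re ⟪f, (dirichletHamiltonian C V).toEuclideanLin f⟫_ℝ ≤ m * ‖f‖ ^ 2 := by
    refine (inner_dirichletHamiltonian_le C V f).trans ?_
    rw [EuclideanSpace.real_norm_sq_eq, Finset.mul_sum]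
    refine Finset.sum_le_sum fun x _ => ?_
    by_cases hx : m < V x
    · have : f x = 0 := congrFun hf ⟨x, Finset.mem_filter.mpr ⟨x.2, hx⟩⟩
      simp [this]
    · gcongr
      exact not_lt.mp hx
  obtain ⟨j, hj⟩ := exists_le_of_re_inner_le_on_ker
    (h.orthonormal_restrictL2.comp toC (Fin.castLE_injective hk))
    (fun j => (h.1 _ (toC j).2).toEuclideanLin_restrictL2) evalHigh codim_lt rayleigh_le
  exact (h.2.1 j (toC j).2 k hk (Nat.lt_succ_iff.mp j.2)).trans hj

end IsDirichletEigenbasis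

section Box

variable {d : ℕ} {a b : ℝ} {x y : Fin d → ℤ}

theorem mem_QBox : x ∈ QBox d a ↔ ∀ i, |(x i : ℝ)| ≤ a / 2 := by
  simp only [QBox, Finset.mem_Icc, Pi.le_def, Int.ceil_le, Int.le_floor, abs_le, forall_and]

theorem QBox_mono (hab : a ≤ b) : QBox d a ⊆ QBox d b := fun _ hx =>
  mem_QBox.mpr fun i => (mem_QBox.mp hx i).trans (by gcongr)

theorem nonneg_of_mem_QBox (hd : 1 ≤ d) (hx : x ∈ QBox d a) : 0 ≤ a := by
  linarith [mem_QBox.mp hx ⟨0, hd⟩, abs_nonneg (x ⟨0, hd⟩ : ℝ)]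

theorem one_lt_card_QBox (hd : 1 ≤ d) (ha : 2 ≤ a) : 1 < #(QBox d a) :=
  Finset.one_lt_card.mpr ⟨0, mem_QBox.mpr fun _ => by norm_num; linarith,
    1, mem_QBox.mpr fun _ => by norm_num; linarith,
    fun h => zero_ne_one (congrFun h ⟨0, hd⟩)⟩

theorem mem_QBoxAt_add (hx : x ∈ QBox d a) (hy : y ∈ QBox d b) : x ∈ QBoxAt (a + b) y := by
  refine Finset.mem_image.mpr ⟨x - y, mem_QBox.mpr fun i => ?_, add_sub_cancel y x⟩
  rw [Pi.sub_apply, Int.cast_sub]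
  linarith [abs_sub (x i : ℝ) (y i), mem_QBox.mp hx i, mem_QBox.mp hy i]

end Box

namespace GaussSetting

variable {d : ℕ} {Ω : Type} [MeasurableSpace Ω] (S : GaussSetting d Ω) {L : ℕ}

theorem one_le_dL (hL : 2 ≤ L) : 1 ≤ S.dL L := by
  obtain ⟨⟨e, -, he⟩, -⟩ := S.dL_def L hL
  have : 1 / S.dL L ≤ 1 := by linarith [S.v_nonneg L e]
  rwa [div_le_one (S.dL_pos L hL)] at this

variable {S} in
theorem Assumption1.tendsto_aL (h : S.Assumption1) :
    Tendsto S.aL atTop atTop := by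
  have hpos : ∀ᶠ L in atTop, S.dL L / S.aL L ∈ Set.Ioi 0 :=
    (eventually_ge_atTop 2).mono fun L hL => div_pos (S.dL_pos L hL) (S.aL_pos L hL)
  have hratio : Tendsto (fun L => (S.dL L / S.aL L)⁻¹) atTop atTop :=
    (tendsto_nhdsWithin_iff.mpr ⟨h, hpos⟩).inv_tendsto_nhdsGT_zero
  refine tendsto_atTop_mono' _ ((eventually_ge_atTop 2).mono fun L hL => ?_) hratio
  rw [inv_div]
  exact div_le_self (S.aL_pos L hL).le (S.one_le_dL hL)

theorem ξ_le_sub_of_zeta_le (hL : 2 ≤ L) {x₀ x : Fin d → ℤ} {ω : Ω} {c : ℝ} (hc : 0 ≤ c)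
    (hv : S.v L (x - x₀) ≤ 1 - c / S.dL L) (hpeak : 3 / 5 * S.aL L ≤ S.ξ L ω x₀)
    (hζ : S.zeta L x₀ x ω ≤ S.shape L (x - x₀) / 10) :
    S.ξ L ω x ≤ S.ξ L ω x₀ - c / 2 * (S.aL L / S.dL L) := by
  have ha := S.aL_pos L hL
  have hcd : 0 ≤ c / S.dL L := div_nonneg hc (S.dL_pos L hL).le
  have hdrop : c / S.dL L * (S.aL L / 2) ≤
      (1 - S.v L (x - x₀)) * (S.ξ L ω x₀ - S.aL L / 10) := by
    gcongr <;> linarith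
  calc S.ξ L ω x
      = S.zeta L x₀ x ω + S.ξ L ω x₀ * S.v L (x - x₀) := by rw [zeta]; ring
    _ ≤ S.shape L (x - x₀) / 10 + S.ξ L ω x₀ * S.v L (x - x₀) := by gcongr
    _ = S.ξ L ω x₀ - (1 - S.v L (x - x₀)) * (S.ξ L ω x₀ - S.aL L / 10) := by rw [shape]; ring
    _ ≤ S.ξ L ω x₀ - c / S.dL L * (S.aL L / 2) := by gcongr
    _ = S.ξ L ω x₀ - c / 2 * (S.aL L / S.dL L) := by ring

end GaussSetting

namespace MesoData

variable {d : ℕ} {Ω : Type} [MeasurableSpace Ω] {S : GaussSetting d Ω} (M : MesoData S)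

theorem rL_nonneg (hd : 1 ≤ d) {L : ℕ} (hL : 2 ≤ L) : 0 ≤ M.rL L := by
  obtain ⟨x, hx, -⟩ := Finset.exists_ne_zero_of_sum_ne_zero
    ((M.principal L hL).2.1.trans_ne one_ne_zero)
  exact nonneg_of_mem_QBox hd hx

theorem aL_le_rL (hd : 1 ≤ d) {L : ℕ} (hL : 2 ≤ L) (ha : 1 < S.aL L) : S.aL L ≤ M.rL L := by
  have hlog : 0 < Real.log (M.rL L) := (Real.log_pos ha).trans_le (M.rL_lower L hL)
  have hr : 0 < M.rL L := (M.rL_nonneg hd hL).lt_of_ne' fun h => by simp [h] at hlog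
  exact (Real.log_le_log_iff (S.aL_pos L hL) hr).mp (M.rL_lower L hL)

theorem tendsto_rL (hd : 1 ≤ d) (hA1 : S.Assumption1) : Tendsto M.rL atTop atTop := by
  refine tendsto_atTop_mono' _ ?_ hA1.tendsto_aL
  filter_upwards [eventually_ge_atTop 2, hA1.tendsto_aL.eventually_gt_atTop 1] with L hL ha
  exact M.aL_le_rL hd hL ha

end MesoData

theorem spectral_gap_general
    {d : ℕ} (hd : 1 ≤ d) {Ω : Type} [MeasurableSpace Ω] (S : GaussSetting d Ω)
    {c : ℝ} (hc : 0 < c) (hv : ∀ L, 2 ≤ L → ∀ x ≠ 0, S.v L x ≤ 1 - c / S.dL L)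
    (hA1 : S.Assumption1) {r R : ℕ → ℝ} (hr : Tendsto r atTop atTop)
    (lam : ℕ → ℕ → Ω → ℝ) (phi : ℕ → ℕ → Ω → (Fin d → ℤ) → ℝ)
    (hbasis : ∀ L : ℕ, 2 ≤ L → ∀ ω, IsDirichletEigenbasis (QBox d (R L)) (S.ξ L ω)
      (fun k => lam L k ω) (fun k => phi L k ω)) :
    ∃ Cgap > (0 : ℝ), ∃ L₀ : ℕ, 1 < L₀ ∧ ∀ L : ℕ, L₀ ≤ L → ∀ x₀ ∈ QBox d (R L - r L),
      ∀ ω ∈ EventE1 S L x₀ ∩ EventE2 S R L x₀,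
        lam L 1 ω ≤ S.ξ L ω x₀ - Cgap * (S.aL L / S.dL L) := by
  obtain ⟨L₀, hL₀⟩ := eventually_atTop.mp <| (eventually_ge_atTop 2).and <|
    (hr.eventually_ge_atTop 2).and (hA1.tendsto_aL.eventually_ge_atTop (5 / 2 * (2 * d + 1)))
  refine ⟨c / 2, by positivity, L₀, (hL₀ L₀ le_rfl).1, fun L hLL₀ x₀ hx₀ ω ⟨hE1, hE2⟩ => ?_⟩
  obtain ⟨hL, hrL, haL⟩ := hL₀ L hLL₀
  have hrR : 0 ≤ R L - r L := nonneg_of_mem_QBox hd hx₀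
  have hx₀R : x₀ ∈ QBox d (R L) := QBox_mono (by linarith) hx₀
  have hpeak : 3 / 5 * S.aL L ≤ S.ξ L ω x₀ := by linarith [(abs_lt.mp (Set.mem_ofPred.mp hE1)).1]
  refine (hbasis L hL ω).eigenvalue_le_of_card_lt_le (one_lt_card_QBox hd (by linarith)) <|
    (Finset.card_le_card fun x hx => ?_).trans (Finset.card_singleton x₀).le
  obtain ⟨hxR, hx⟩ := Finset.mem_filter.mp hx
  by_contra hne
  have hxE2 : x ∈ QBoxAt (2 * R L) x₀ := two_mul (R L) ▸ mem_QBoxAt_add hxR hx₀R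
  exact hx.not_ge <| S.ξ_le_sub_of_zeta_le hL hc.le
    (hv L hL _ (sub_ne_zero.mpr (Finset.notMem_singleton.mp hne))) hpeak
    (abs_le.mp (hE2 x hxE2)).2

/-- Proposition 4.6, spectral gap.
There are `C_gap > 0` and `L₀ > 1` such that for all `L ≥ L₀` and all
`x₀ ∈ Q_{R_L − r_L}`, on the event `E¹_{L,x₀} ∩ E²_{L,x₀}`, the second largest Dirichlet
eigenvalue of `Δ + ξ_L` on `Q_{R_L}` satisfies
`λ₂(Q_{R_L}, ξ_L) ≤ ξ_L(x₀) − C_gap · a_L/d_L`. -/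
theorem spectral_gap
    {d : ℕ} (hd : 1 ≤ d) {Ω : Type} [MeasurableSpace Ω] (S : GaussSetting d Ω)
    (c c' : ℝ) (hSR : S.ShortRangeDecay c c')
    (hLR : S.LongRangeDecay)
    (hA1 : S.Assumption1)
    (M : MesoData S)
    -- `(lam L k ω, phi L k ω)` enumerate the Dirichlet eigenpairs of `Δ + ξ_L` on
    -- `Q_{R_L}` in nonincreasing order of the eigenvalues; in particular `lam L 1 ω`
    -- is the second largest eigenvalue `λ₂(Q_{R_L}, ξ_L)`
    (lam : ℕ → ℕ → Ω → ℝ) (phi : ℕ → ℕ → Ω → (Fin d → ℤ) → ℝ)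
    (hbasis : ∀ L : ℕ, 2 ≤ L → ∀ ω, IsDirichletEigenbasis (QBox d (M.RL L)) (S.ξ L ω)
      (fun k => lam L k ω) (fun k => phi L k ω)) :
    ∃ Cgap > (0 : ℝ), ∃ L₀ : ℕ, 1 < L₀ ∧ ∀ L : ℕ, L₀ ≤ L →
      ∀ x₀ ∈ QBox d (M.RL L - M.rL L),
      ∀ ω ∈ EventE1 S L x₀ ∩ EventE2 S M.RL L x₀,
        lam L 1 ω ≤ S.ξ L ω x₀ - Cgap * (S.aL L / S.dL L) := by
  exact spectral_gap_general hd S hSR.1 (fun L hL x hx => (hSR.2.2 L hL x hx).2) hA1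
    (M.tendsto_rL hd hA1) lam phi hbasis
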